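/- Let p be an odd prime and let d, e, f be positive integers with 1 ≤ f < d < e. Then the order of the automorphism group of M₂(p,d,e,f) equals p^{d+e+2f−1}(p−1). -/

import Mathlib

/-- Relators for the group `M₁(p,d,e,f) = ⟨a, b ∣ a^(p^e) = b^(p^d) = 1, b⁻¹ab = a^(1+p^f)⟩`,
where `a` is generator `0` and `b` is generator `1`. -/
def M1rels (p d e f : ℕ) : Set (FreeGroup (Fin 2)) :=
  {FreeGroup.of 0 ^ p ^ e, FreeGroup.of 1 ^ p ^ d,
    (FreeGroup.of 1)⁻¹ * FreeGroup.of 0 * FreeGroup.of 1 * (FreeGroup.of 0 ^ (1 + p ^ f))⁻¹}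

/-- The metacyclic group `M₁(p,d,e,f) = ⟨a, b ∣ a^(p^e) = b^(p^d) = 1, b⁻¹ab = a^(1+p^f)⟩`. -/
abbrev M1 (p d e f : ℕ) : Type := PresentedGroup (M1rels p d e f)

/-- The canonical generator `a` of `M₁(p,d,e,f)`. -/
def M1a (p d e f : ℕ) : M1 p d e f := PresentedGroup.of 0

/-- The canonical generator `b` of `M₁(p,d,e,f)`. -/
def M1b (p d e f : ℕ) : M1 p d e f := PresentedGroup.of 1

/-- Relators for the group `M₂(p,d,e,f) = ⟨a, b ∣ a^(p^d) = b^(p^e) = 1, b⁻¹ab = a^(1+p^f)⟩`,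
where `a` is generator `0` and `b` is generator `1`. -/
def M2rels (p d e f : ℕ) : Set (FreeGroup (Fin 2)) :=
  {FreeGroup.of 0 ^ p ^ d, FreeGroup.of 1 ^ p ^ e,
    (FreeGroup.of 1)⁻¹ * FreeGroup.of 0 * FreeGroup.of 1 * (FreeGroup.of 0 ^ (1 + p ^ f))⁻¹}

/-- The metacyclic group `M₂(p,d,e,f) = ⟨a, b ∣ a^(p^d) = b^(p^e) = 1, b⁻¹ab = a^(1+p^f)⟩`. -/
abbrev M2 (p d e f : ℕ) : Type := PresentedGroup (M2rels p d e f)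

/-- The canonical generator `a` of `M₂(p,d,e,f)`. -/
def M2a (p d e f : ℕ) : M2 p d e f := PresentedGroup.of 0

/-- The canonical generator `b` of `M₂(p,d,e,f)`. -/
def M2b (p d e f : ℕ) : M2 p d e f := PresentedGroup.of 1

/-- Relators for the group
`M₃(p,d,e,h,f) = ⟨a, b ∣ a^(p^h) = 1, b^(p^(d+e-h)) = a^(p^d), b⁻¹ab = a^(1+p^f)⟩`,
where `a` is generator `0` and `b` is generator `1`. -/
def M3rels (p d e h f : ℕ) : Set (FreeGroup (Fin 2)) :=
  {FreeGroup.of 0 ^ p ^ h, FreeGroup.of 1 ^ p ^ (d + e - h) * (FreeGroup.of 0 ^ p ^ d)⁻¹,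
    (FreeGroup.of 1)⁻¹ * FreeGroup.of 0 * FreeGroup.of 1 * (FreeGroup.of 0 ^ (1 + p ^ f))⁻¹}

/-- The non-split metacyclic group
`M₃(p,d,e,h,f) = ⟨a, b ∣ a^(p^h) = 1, b^(p^(d+e-h)) = a^(p^d), b⁻¹ab = a^(1+p^f)⟩`. -/
abbrev M3 (p d e h f : ℕ) : Type := PresentedGroup (M3rels p d e h f)

/-- The canonical generator `a` of `M₃(p,d,e,h,f)`. -/
def M3a (p d e h f : ℕ) : M3 p d e h f := PresentedGroup.of 0

/-- The canonical generator `b` of `M₃(p,d,e,h,f)`. -/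
def M3b (p d e h f : ℕ) : M3 p d e h f := PresentedGroup.of 1

/-- `(α, β)` is an exact `(m,n)`-bicyclic pair of `G`: `α` has order `m`, `β` has order `n`,
`⟨α⟩ ∩ ⟨β⟩ = 1`, and `G = ⟨α⟩⟨β⟩`. -/
def IsExactBicyclicPair {G : Type*} [Group G] (m n : ℕ) (α β : G) : Prop :=
  orderOf α = m ∧ orderOf β = n ∧
    Subgroup.zpowers α ⊓ Subgroup.zpowers β = ⊥ ∧
    ∀ g : G, ∃ i j : ℤ, g = α ^ i * β ^ j

/-!
Put `c = b⁻¹`, so that `c a c⁻¹ = a ^ (1 + p ^ f)`, and write the elements of `M₂(p,d,e,f)` as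
`a ^ x * c ^ y` with `(x, y) ∈ ℤ/p^d × ℤ/p^e`; then `c ^ y` acts on `⟨a⟩` as multiplication by
`χ y = (1 + p ^ f) ^ y`. An endomorphism is determined by the images `(x₁, y₁)` of `a` and
`(x₂, y₂)` of `c`. For an automorphism, the relation `c a c⁻¹ = a ^ (1 + p ^ f)` forces
`p ^ f * y₁ = 0`, so that `χ y₁ = 1`; the order of `a` then forces `x₁` to be a unit, and the
relation forces `χ y₂ = χ 1`. Conversely all such images satisfy the relations and define an
injective endomorphism, because a geometric sum `∑ t < n, (1 + p ^ f) ^ t` has the same `p`-adic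
valuation as `n`. Counting the choices of `x₁, y₁, x₂, y₂` gives
`φ(p ^ d) * p ^ f * p ^ d * p ^ (e - (d - f))`, where `p ^ (d - f)` is the order of `1 + p ^ f`
modulo `p ^ d`.
-/

open Multiplicative

theorem orderOf_one_add_prime_pow {p d f : ℕ} (hp : p.Prime) (hpf : 2 < p ^ f) (hfd : f ≤ d) :
    orderOf (1 + (p : ZMod (p ^ d)) ^ f) = p ^ (d - f) := by
  obtain ⟨k, rfl⟩ := Nat.exists_eq_add_of_le' hfd
  have hf : f ≠ 0 := by rintro rfl; simp at hpf
  have hpf' : f + 2 ≤ p * f := by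
    obtain rfl | hp3 := hp.two_le.eq_or_lt
    · have : f ≠ 1 := by rintro rfl; simp at hpf
      lia
    · calc f + 2 ≤ 3 * f := by lia
        _ ≤ p * f := Nat.mul_le_mul_right f hp3
  simpa using ZMod.orderOf_one_add_mul_prime_pow hp f hf hpf' 1
    (Nat.prime_iff_prime_int.mp hp).not_dvd_one k

theorem pow_dvd_geom_sum_one_add_pow_iff {p f : ℕ} (hp : p.Prime) (hpf : 2 < p ^ f) (k n : ℕ) :
    p ^ k ∣ ∑ t ∈ Finset.range n, (1 + p ^ f) ^ t ↔ p ^ k ∣ n := by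
  have hgeom := geom_sum_mul_of_one_le (Nat.le_add_right 1 (p ^ f)) n
  rw [Nat.add_sub_cancel_left] at hgeom
  calc p ^ k ∣ ∑ t ∈ Finset.range n, (1 + p ^ f) ^ t
      ↔ p ^ (k + f) ∣ (1 + p ^ f) ^ n - 1 := by
        rw [← hgeom, pow_add, Nat.mul_dvd_mul_iff_right (by lia)]
    _ ↔ (1 + (p : ZMod (p ^ (k + f))) ^ f) ^ n = 1 := by
        rw [← ZMod.natCast_eq_zero_iff, Nat.cast_pred (by positivity), sub_eq_zero]
        push_cast
        rfl
    _ ↔ p ^ k ∣ n := by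
        rw [← orderOf_dvd_iff_pow_eq_one, orderOf_one_add_prime_pow hp hpf (by lia),
          Nat.add_sub_cancel]

theorem nsmul_eq_zero_of_dvd {G : Type*} [AddMonoid G] {x : G} {k l : ℕ} (hkl : k ∣ l)
    (hx : k • x = 0) : l • x = 0 :=
  addOrderOf_dvd_iff_nsmul_eq_zero.mp ((addOrderOf_dvd_of_nsmul_eq_zero hx).trans hkl)

theorem natCast_zmod_dvd_natCast_iff {n k : ℕ} (hk : k ∣ n) (a : ℕ) :
    (k : ZMod n) ∣ a ↔ k ∣ a := by
  refine ⟨fun h => ?_, Nat.cast_dvd_cast⟩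
  have h := map_dvd (ZMod.castHom hk (ZMod k)) h
  rwa [map_natCast, map_natCast, ZMod.natCast_self, zero_dvd_iff, ZMod.natCast_eq_zero_iff] at h

theorem nsmul_zmod_eq_zero_iff_dvd {n k l : ℕ} [NeZero n] (hkl : k * l = n) (y : ZMod n) :
    k • y = 0 ↔ (l : ZMod n) ∣ y := by
  obtain ⟨a, rfl⟩ := ZMod.natCast_zmod_surjective y
  have hk : 0 < k := Nat.pos_of_ne_zero fun h => NeZero.ne n (by rw [← hkl, h, zero_mul])
  rw [natCast_zmod_dvd_natCast_iff (Dvd.intro_left k hkl), nsmul_eq_mul, ← Nat.cast_mul,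
    ZMod.natCast_eq_zero_iff, ← Nat.mul_dvd_mul_iff_left hk (b := l), hkl]

theorem card_nsmul_zmod_eq_zero {n k : ℕ} [NeZero n] (hk : k ∣ n) :
    Nat.card {y : ZMod n // k • y = 0} = k := by
  have h := IsAddCyclic.card_nsmulAddMonoidHom_ker (G := ZMod n) k
  rwa [Nat.card_zmod, Nat.gcd_eq_right hk] at h

section AddChar

variable {n : ℕ} {M : Type*} [Monoid M] (χ : AddChar (ZMod n) M)

theorem orderOf_addChar_one_dvd : orderOf (χ 1) ∣ n := by
  rw [orderOf_dvd_iff_pow_eq_one, ← AddChar.map_nsmul_eq_pow, nsmul_one, ZMod.natCast_self,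
    AddChar.map_zero_eq_one]

variable [NeZero n]

theorem addChar_zmod_eq_one_iff (y : ZMod n) : χ y = 1 ↔ (orderOf (χ 1) : ZMod n) ∣ y := by
  obtain ⟨a, rfl⟩ := ZMod.natCast_zmod_surjective y
  rw [natCast_zmod_dvd_natCast_iff (orderOf_addChar_one_dvd χ), orderOf_dvd_iff_pow_eq_one,
    ← AddChar.map_nsmul_eq_pow, nsmul_one]

theorem addChar_zmod_eq_iff (y z : ZMod n) :
    χ y = χ z ↔ (orderOf (χ 1) : ZMod n) ∣ y - z := by
  rw [← addChar_zmod_eq_one_iff, ← (AddChar.val_isUnit χ z).mul_eq_right,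
    ← AddChar.map_add_eq_mul, sub_add_cancel]

theorem card_addChar_zmod_eq (z : ZMod n) :
    Nat.card {y // χ y = χ z} = n / orderOf (χ 1) := by
  rw [← card_nsmul_zmod_eq_zero (Nat.div_dvd_of_dvd (orderOf_addChar_one_dvd χ))]
  refine Nat.card_congr ((Equiv.subRight z).subtypeEquiv fun y => ?_)
  rw [addChar_zmod_eq_iff, Equiv.subRight_apply,
    nsmul_zmod_eq_zero_iff_dvd (Nat.div_mul_cancel (orderOf_addChar_one_dvd χ))]

end AddChar

section Relations

variable {K L : Type*} [Group K] [Group L]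

/-- The relations `α ^ m = γ ^ n = 1` and `γ α γ⁻¹ = α ^ r`, which present the split metacyclic
group. In the notation of `M₂(p,d,e,f)`, `α` is `a` and `γ` is `b⁻¹`. -/
structure MetacyclicRelations (m n r : ℕ) (α γ : K) : Prop where
  pow_left : α ^ m = 1
  pow_right : γ ^ n = 1
  semiconj : SemiconjBy γ α (α ^ r)

theorem MetacyclicRelations.map {m n r : ℕ} {α γ : K} (h : MetacyclicRelations m n r α γ)
    (φ : K →* L) : MetacyclicRelations m n r (φ α) (φ γ) where
  pow_left := by rw [← map_pow, h.pow_left, map_one]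
  pow_right := by rw [← map_pow, h.pow_right, map_one]
  semiconj := by simpa only [map_pow] using h.semiconj.map φ

theorem semiconjBy_pow_pow {α γ : K} {r : ℕ} (h : SemiconjBy γ α (α ^ r)) (l k : ℕ) :
    SemiconjBy (γ ^ l) (α ^ k) (α ^ (r ^ l * k)) := by
  rw [pow_mul]
  refine SemiconjBy.pow_right ?_ k
  induction l with
  | zero => simp
  | succ l ih =>
    rw [pow_succ, pow_succ, pow_mul]
    exact (ih.pow_right r).mul_left h

/-- The homomorphism `k ↦ α ^ k` out of the cyclic group of order `m`. -/
def zmodPowersHom {m : ℕ} (α : K) (hα : α ^ m = 1) : Multiplicative (ZMod m) →* K :=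
  AddMonoidHom.toMultiplicativeLeft
    (ZMod.lift m ⟨zmultiplesHom (Additive K) (.ofMul α), by simp [← ofMul_pow, hα]⟩)

theorem zmodPowersHom_ofAdd_natCast {m : ℕ} (α : K) (hα : α ^ m = 1) (k : ℕ) :
    zmodPowersHom α hα (ofAdd (k : ZMod m)) = α ^ k := by
  have h := ZMod.lift_coe m
    ⟨zmultiplesHom (Additive K) (.ofMul α), by simp [← ofMul_pow, hα]⟩ (k : ℤ)
  simpa [zmodPowersHom] using congrArg Additive.toMul h

end Relations

section CharAction

variable {A R : Type*} [AddCommGroup A] [CommRing R]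

/-- The action of `A` on the additive group of `R` in which `y` acts as multiplication by `χ y`. -/
def charAction (χ : AddChar A R) : Multiplicative A →* MulAut (Multiplicative R) :=
  (MulAutMultiplicative R).symm.toMonoidHom.comp (AddAut.mulLeft.comp χ.toMonoidHom.toHomUnits)

@[simp]
theorem toAdd_charAction (χ : AddChar A R) (y : Multiplicative A) (x : Multiplicative R) :
    (charAction χ y x).toAdd = χ y.toAdd * x.toAdd := rfl

/-- The semidirect product `R ⋊ A` in which `y : A` acts on `R` as multiplication by `χ y`. -/
abbrev CharSemidirect (χ : AddChar A R) : Type _ :=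
  Multiplicative R ⋊[charAction χ] Multiplicative A

end CharAction

namespace CharSemidirect

section Powers

variable {A R : Type*} [AddCommGroup A] [CommRing R] {χ : AddChar A R}

theorem toAdd_right_pow (g : CharSemidirect χ) (k : ℕ) :
    (g ^ k).right.toAdd = k • g.right.toAdd := by
  rw [← SemidirectProduct.rightHom_eq_right, map_pow, toAdd_pow]

theorem toAdd_left_pow (g : CharSemidirect χ) (k : ℕ) :
    (g ^ k).left.toAdd = (∑ t ∈ Finset.range k, χ g.right.toAdd ^ t) * g.left.toAdd := by
  induction k with
  | zero => simp
  | succ k ih =>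
    rw [pow_succ', SemidirectProduct.mul_left, toAdd_mul, toAdd_charAction, ih, geom_sum_succ]
    ring

variable {α γ : CharSemidirect χ}

theorem toAdd_left_pow_of_eq_one (h : χ α.right.toAdd = 1) (k : ℕ) :
    (α ^ k).left.toAdd = k * α.left.toAdd := by
  simp [toAdd_left_pow, h]

theorem addChar_toAdd_right_pow_of_eq_one (h : χ α.right.toAdd = 1) (k : ℕ) :
    χ (α ^ k).right.toAdd = 1 := by
  rw [toAdd_right_pow, AddChar.map_nsmul_eq_pow, h, one_pow]

theorem eq_one_iff : α = 1 ↔ α.left.toAdd = 0 ∧ α.right.toAdd = 0 :=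
  SemidirectProduct.ext_iff

theorem nsmul_toAdd_right_eq_zero_of_semiconjBy {k : ℕ} (h : SemiconjBy γ α (α ^ (1 + k))) :
    k • α.right.toAdd = 0 := by
  have hr := congrArg (fun g => g.right.toAdd) h.eq
  simp only [SemidirectProduct.mul_right, toAdd_mul, toAdd_right_pow, add_nsmul, one_nsmul] at hr
  rw [add_comm] at hr
  simpa [add_assoc] using hr

theorem semiconjBy_iff_of_eq_one (hα : χ α.right.toAdd = 1) {k : ℕ}
    (hk : k • α.right.toAdd = 0) :
    SemiconjBy γ α (α ^ (1 + k)) ↔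
      χ γ.right.toAdd * α.left.toAdd = (1 + k : ℕ) * α.left.toAdd := by
  have hright : (γ * α).right = (α ^ (1 + k) * γ).right := by
    apply toAdd.injective
    simp [toAdd_right_pow, add_nsmul, hk, add_comm]
  rw [SemiconjBy, SemidirectProduct.ext_iff, and_iff_left hright, ← toAdd.injective.eq_iff,
    SemidirectProduct.mul_left, SemidirectProduct.mul_left, toAdd_mul, toAdd_mul,
    toAdd_charAction, toAdd_charAction, toAdd_left_pow_of_eq_one hα,
    addChar_toAdd_right_pow_of_eq_one hα, one_mul, add_comm, add_left_inj]

theorem pow_mul_pow_eq_one_iff_of_eq_one (hα : χ α.right.toAdd = 1) (k l : ℕ) :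
    α ^ k * γ ^ l = 1 ↔
      k * α.left.toAdd + (∑ t ∈ Finset.range l, χ γ.right.toAdd ^ t) * γ.left.toAdd = 0 ∧
        k • α.right.toAdd + l • γ.right.toAdd = 0 := by
  rw [eq_one_iff, SemidirectProduct.mul_left, toAdd_mul, toAdd_charAction,
    addChar_toAdd_right_pow_of_eq_one hα, one_mul, toAdd_left_pow_of_eq_one hα, toAdd_left_pow,
    SemidirectProduct.mul_right, toAdd_mul, toAdd_right_pow, toAdd_right_pow]

end Powers

section Generators

variable {m n r : ℕ} (χ : AddChar (ZMod n) (ZMod m))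

/-- The generator of the normal factor. -/
def a : CharSemidirect χ := .inl (ofAdd 1)

/-- The generator of the complement; it stands for `b⁻¹` in `M₂(p,d,e,f)`. -/
def c : CharSemidirect χ := .inr (ofAdd 1)

theorem a_pow (k : ℕ) : a χ ^ k = .inl (ofAdd (k : ZMod m)) := by
  rw [a, ← map_pow, ← ofAdd_nsmul, nsmul_one]

theorem c_pow (k : ℕ) : c χ ^ k = .inr (ofAdd (k : ZMod n)) := by
  rw [c, ← map_pow, ← ofAdd_nsmul, nsmul_one]

variable {χ}

theorem metacyclicRelations_a_c (hχ : χ 1 = r) : MetacyclicRelations m n r (a χ) (c χ) where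
  pow_left := by simp [a_pow]
  pow_right := by simp [c_pow]
  semiconj := by
    rw [a_pow]
    exact SemidirectProduct.ext (toAdd.injective (by simp [a, c, hχ])) (by simp [a, c])

variable [NeZero m] [NeZero n]

instance : Finite (CharSemidirect χ) := Finite.of_equiv _ SemidirectProduct.equivProd.symm

theorem exists_a_pow_mul_c_pow_eq (g : CharSemidirect χ) : ∃ k l : ℕ, a χ ^ k * c χ ^ l = g := by
  obtain ⟨k, hk⟩ := ZMod.natCast_zmod_surjective g.left.toAdd
  obtain ⟨l, hl⟩ := ZMod.natCast_zmod_surjective g.right.toAdd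
  exact ⟨k, l, by rw [a_pow, c_pow, hk, hl]; exact SemidirectProduct.inl_left_mul_inr_right g⟩

variable {K : Type*} [Group K]

theorem hom_ext {φ ψ : CharSemidirect χ →* K} (ha : φ (a χ) = ψ (a χ)) (hc : φ (c χ) = ψ (c χ)) :
    φ = ψ := by
  ext1 g
  obtain ⟨k, l, rfl⟩ := exists_a_pow_mul_c_pow_eq g
  simp only [map_mul, map_pow, ha, hc]

/-- The homomorphism `a ↦ α`, `c ↦ γ`: `CharSemidirect χ` is presented by
`MetacyclicRelations`. -/
def lift (hχ : χ 1 = r) {α γ : K} (h : MetacyclicRelations m n r α γ) : CharSemidirect χ →* K :=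
  SemidirectProduct.lift (zmodPowersHom α h.pow_left) (zmodPowersHom γ h.pow_right) <| by
    refine fun y => MonoidHom.ext fun x => ?_
    obtain ⟨l, hl⟩ := ZMod.natCast_zmod_surjective y.toAdd
    obtain ⟨k, hk⟩ := ZMod.natCast_zmod_surjective x.toAdd
    obtain rfl : ofAdd (l : ZMod n) = y := hl
    obtain rfl : ofAdd (k : ZMod m) = x := hk
    have hact : charAction χ (ofAdd (l : ZMod n)) (ofAdd (k : ZMod m)) =
        ofAdd ((r ^ l * k : ℕ) : ZMod m) := by
      apply toAdd.injective
      rw [toAdd_charAction, toAdd_ofAdd, ← nsmul_one l, AddChar.map_nsmul_eq_pow, hχ]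
      simp
    simp only [MonoidHom.comp_apply, MulEquiv.coe_toMonoidHom, hact, MulAut.conj_apply,
      zmodPowersHom_ofAdd_natCast]
    rw [(semiconjBy_pow_pow h.semiconj l k).eq, mul_inv_cancel_right]

variable (hχ : χ 1 = r) {α γ : K} (h : MetacyclicRelations m n r α γ)

@[simp]
theorem lift_a : lift hχ h (a χ) = α := by
  rw [lift, a, SemidirectProduct.lift_inl]
  simpa using zmodPowersHom_ofAdd_natCast α h.pow_left 1

@[simp]
theorem lift_c : lift hχ h (c χ) = γ := by
  rw [lift, c, SemidirectProduct.lift_inr]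
  simpa using zmodPowersHom_ofAdd_natCast γ h.pow_right 1

end Generators

section PrimePower

variable {p d e f : ℕ} {χ : AddChar (ZMod (p ^ e)) (ZMod (p ^ d))}

variable (f) in
/-- The conditions on coordinates under which `a ↦ α`, `c ↦ γ` extends to an automorphism of
`CharSemidirect χ` when `χ 1 = 1 + p ^ f`. -/
structure IsAutPair (α γ : CharSemidirect χ) : Prop where
  isUnit_left : IsUnit α.left.toAdd
  nsmul_right : p ^ f • α.right.toAdd = 0
  addChar_right : χ γ.right.toAdd = χ 1

/-- A pair satisfying `IsAutPair`, given by its four independent coordinates. -/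
noncomputable def isAutPairEquiv :
    {q : CharSemidirect χ × CharSemidirect χ // IsAutPair f q.1 q.2} ≃
    ((ZMod (p ^ d))ˣ × {y : ZMod (p ^ e) // p ^ f • y = 0}) ×
      (ZMod (p ^ d) × {y : ZMod (p ^ e) // χ y = χ 1}) where
  toFun q := ((q.2.isUnit_left.unit, ⟨_, q.2.nsmul_right⟩),
    (q.1.2.left.toAdd, ⟨_, q.2.addChar_right⟩))
  invFun t := ⟨(⟨ofAdd t.1.1.val, ofAdd t.1.2.1⟩, ⟨ofAdd t.2.1, ofAdd t.2.2.1⟩),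
    ⟨t.1.1.isUnit, t.1.2.2, t.2.2.2⟩⟩
  right_inv _ := by ext <;> rfl

variable [hp : Fact p.Prime]

theorem orderOf_addChar_one (hpf : 2 < p ^ f) (hfd : f ≤ d)
    (hχ : χ 1 = (1 + p ^ f : ℕ)) : orderOf (χ 1) = p ^ (d - f) := by
  rw [hχ, ← orderOf_one_add_prime_pow hp.out hpf hfd]
  push_cast
  rfl

theorem addChar_eq_one_of_nsmul_eq_zero (hpf : 2 < p ^ f) (hfd : f ≤ d)
    (hde : d ≤ e) (hχ : χ 1 = (1 + p ^ f : ℕ)) {y : ZMod (p ^ e)} (hy : p ^ f • y = 0) :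
    χ y = 1 := by
  rw [addChar_zmod_eq_one_iff, orderOf_addChar_one hpf hfd hχ]
  rw [nsmul_zmod_eq_zero_iff_dvd (pow_mul_pow_sub p (hfd.trans hde))] at hy
  exact (Nat.cast_dvd_cast (pow_dvd_pow p (by lia))).trans hy

theorem isUnit_toAdd_left_of_pow_ne_one (hfd : f < d) {α : CharSemidirect χ}
    (hright : p ^ f • α.right.toAdd = 0) (hα : χ α.right.toAdd = 1) (hpow : α ^ p ^ (d - 1) ≠ 1) :
    IsUnit α.left.toAdd := by
  contrapose! hpow
  have hleft : p ^ (d - 1) • α.left.toAdd = 0 := by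
    obtain ⟨x, hx⟩ := ZMod.natCast_zmod_surjective α.left.toAdd
    rw [← hx, ZMod.isUnit_natCast_iff_not_dvd_pow hp.out (by lia), not_not] at hpow
    rw [nsmul_zmod_eq_zero_iff_dvd (l := p) (pow_sub_one_mul (by lia) p), ← hx]
    exact Nat.cast_dvd_cast hpow
  refine eq_one_iff.mpr ⟨?_, ?_⟩
  · rw [toAdd_left_pow_of_eq_one hα, ← nsmul_eq_mul, hleft]
  · rw [toAdd_right_pow]
    exact nsmul_eq_zero_of_dvd (pow_dvd_pow p (Nat.le_sub_one_of_lt hfd)) hright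

theorem isAutPair_mulAut (hpf : 2 < p ^ f) (hfd : f < d) (hde : d ≤ e)
    (hχ : χ 1 = (1 + p ^ f : ℕ)) (φ : MulAut (CharSemidirect χ)) :
    IsAutPair f (φ (a χ)) (φ (c χ)) := by
  have hrel : MetacyclicRelations (p ^ d) (p ^ e) (1 + p ^ f) (φ (a χ)) (φ (c χ)) :=
    (metacyclicRelations_a_c hχ).map φ.toMonoidHom
  have hright := nsmul_toAdd_right_eq_zero_of_semiconjBy hrel.semiconj
  have hα := addChar_eq_one_of_nsmul_eq_zero hpf hfd.le hde hχ hright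
  have hpow : φ (a χ) ^ p ^ (d - 1) ≠ 1 := by
    rw [← map_pow, EmbeddingLike.map_ne_one_iff, a_pow, ← map_one SemidirectProduct.inl,
      SemidirectProduct.inl_injective.ne_iff, ofAdd_eq_one.ne, Ne, ZMod.natCast_eq_zero_iff,
      Nat.pow_dvd_pow_iff_le_right hp.out.one_lt]
    lia
  have hunit := isUnit_toAdd_left_of_pow_ne_one hfd hright hα hpow
  refine ⟨hunit, hright, hunit.mul_right_cancel ?_⟩
  rw [hχ]
  exact (semiconjBy_iff_of_eq_one hα hright).mp hrel.semiconj

namespace IsAutPair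

variable {α γ : CharSemidirect χ}

theorem metacyclicRelations (hpf : 2 < p ^ f) (hfd : f ≤ d) (hde : d ≤ e)
    (hχ : χ 1 = (1 + p ^ f : ℕ)) (h : IsAutPair f α γ) :
    MetacyclicRelations (p ^ d) (p ^ e) (1 + p ^ f) α γ := by
  have hα := addChar_eq_one_of_nsmul_eq_zero hpf hfd hde hχ h.nsmul_right
  refine ⟨?_, ?_, (semiconjBy_iff_of_eq_one hα h.nsmul_right).mpr (by rw [h.addChar_right, hχ])⟩
  · refine eq_one_iff.mpr ⟨?_, ?_⟩
    · rw [toAdd_left_pow_of_eq_one hα, ZMod.natCast_self, zero_mul]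
    · rw [toAdd_right_pow]
      exact nsmul_eq_zero_of_dvd (pow_dvd_pow p hfd) h.nsmul_right
  · refine eq_one_iff.mpr ⟨?_, ?_⟩
    · have hsum : ((∑ t ∈ Finset.range (p ^ e), (1 + p ^ f) ^ t : ℕ) : ZMod (p ^ d)) = 0 := by
        rw [ZMod.natCast_eq_zero_iff, pow_dvd_geom_sum_one_add_pow_iff hp.out hpf]
        exact pow_dvd_pow p hde
      rw [toAdd_left_pow, h.addChar_right, hχ]
      exact_mod_cast mul_eq_zero_of_left hsum _
    · rw [toAdd_right_pow, nsmul_eq_mul, ZMod.natCast_self, zero_mul]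

theorem isUnit_right (hpf : 2 < p ^ f) (hfd : f < d)
    (hχ : χ 1 = (1 + p ^ f : ℕ)) (h : IsAutPair f α γ) : IsUnit γ.right.toAdd := by
  have hdvd := (addChar_zmod_eq_iff χ _ _).mp h.addChar_right
  rw [orderOf_addChar_one hpf hfd.le hχ, Nat.cast_pow] at hdvd
  obtain ⟨w, hw⟩ := (dvd_pow_self (p : ZMod (p ^ e)) (by lia)).trans hdvd
  have hnil : IsNilpotent (p * w) :=
    (Commute.all _ _).isNilpotent_mul_right ⟨e, by rw [← Nat.cast_pow, ZMod.natCast_self]⟩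
  simpa [← hw] using hnil.isUnit_one_add

theorem dvd_of_pow_mul_pow_eq_one (hpf : 2 < p ^ f) (hfd : f < d) (hde : d ≤ e)
    (hχ : χ 1 = (1 + p ^ f : ℕ)) (h : IsAutPair f α γ) {x y : ℕ} (hxy : α ^ x * γ ^ y = 1) :
    p ^ d ∣ x ∧ p ^ e ∣ y := by
  have hα := addChar_eq_one_of_nsmul_eq_zero hpf hfd.le hde hχ h.nsmul_right
  obtain ⟨hleft, hright⟩ := (pow_mul_pow_eq_one_iff_of_eq_one hα x y).mp hxy
  rw [h.addChar_right, hχ, add_comm] at hleft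
  rw [nsmul_eq_mul, nsmul_eq_mul] at hright
  obtain ⟨j, hj⟩ := (nsmul_zmod_eq_zero_iff_dvd (pow_mul_pow_sub p (hfd.le.trans hde)) _).mp
    h.nsmul_right
  have hdvd_y {k l : ℕ} (hx : p ^ k ∣ x) (hl : l ≤ e) (hlk : l ≤ k + (e - f)) : p ^ l ∣ y := by
    rw [← natCast_zmod_dvd_natCast_iff (pow_dvd_pow p hl),
      ← (h.isUnit_right hpf hfd hχ).dvd_mul_right, eq_neg_of_add_eq_zero_right hright, dvd_neg,
      hj, ← mul_assoc, ← Nat.cast_mul]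
    refine (Nat.cast_dvd_cast ?_).mul_right j
    exact (pow_dvd_pow p hlk).trans (pow_add p k _ ▸ Nat.mul_dvd_mul_right hx _)
  -- Divisibility climbs by alternating: `p ^ k ∣ x` gives `p ^ (k + 1) ∣ y`, hence
  -- `p ^ (k + 1)` divides the geometric sum of length `y`, hence `x`.
  have hdvd_x (k : ℕ) (hk : k ≤ d) : p ^ k ∣ x := by
    induction k with
    | zero => simp
    | succ k ih =>
      have hsum := (pow_dvd_geom_sum_one_add_pow_iff hp.out hpf _ _).mpr
        (hdvd_y (ih (by lia)) (l := k + 1) (by lia) (by lia))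
      rw [← natCast_zmod_dvd_natCast_iff (pow_dvd_pow p hk), ← h.isUnit_left.dvd_mul_right,
        eq_neg_of_add_eq_zero_right hleft, dvd_neg]
      refine Dvd.dvd.mul_right ?_ _
      exact_mod_cast Nat.cast_dvd_cast (α := ZMod (p ^ d)) hsum
  exact ⟨hdvd_x d le_rfl, hdvd_y (hdvd_x d le_rfl) le_rfl (by lia)⟩

theorem lift_bijective (hpf : 2 < p ^ f) (hfd : f < d) (hde : d ≤ e)
    (hχ : χ 1 = (1 + p ^ f : ℕ)) (h : IsAutPair f α γ) :
    Function.Bijective (lift hχ (h.metacyclicRelations hpf hfd.le hde hχ)) := by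
  refine Finite.injective_iff_bijective.mp <| (injective_iff_map_eq_one _).mpr fun g hg => ?_
  obtain ⟨x, y, rfl⟩ := exists_a_pow_mul_c_pow_eq g
  rw [map_mul, map_pow, map_pow, lift_a, lift_c] at hg
  obtain ⟨hx, hy⟩ := h.dvd_of_pow_mul_pow_eq_one hpf hfd hde hχ hg
  rw [a_pow, c_pow, (ZMod.natCast_eq_zero_iff x _).mpr hx, (ZMod.natCast_eq_zero_iff y _).mpr hy]
  simp

end IsAutPair

/-- An automorphism is encoded by its values on the generators `a` and `c`. -/
noncomputable def mulAutEquivIsAutPair (hpf : 2 < p ^ f) (hfd : f < d)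
    (hde : d ≤ e) (hχ : χ 1 = (1 + p ^ f : ℕ)) : MulAut (CharSemidirect χ) ≃
      {q : CharSemidirect χ × CharSemidirect χ // IsAutPair f q.1 q.2} :=
  Equiv.ofBijective
    (fun φ => ⟨(φ (a χ), φ (c χ)), isAutPair_mulAut hpf hfd hde hχ φ⟩) <| by
    refine ⟨fun φ ψ h => ?_, fun ⟨q, h⟩ => ?_⟩
    · simp only [Subtype.mk.injEq, Prod.mk.injEq] at h
      exact MulEquiv.toMonoidHom_injective (hom_ext h.1 h.2)
    · have hrel := h.metacyclicRelations hpf hfd.le hde hχ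
      exact ⟨.ofBijective _ (h.lift_bijective hpf hfd hde hχ),
        Subtype.ext (Prod.ext (lift_a hχ hrel) (lift_c hχ hrel))⟩

theorem card_mulAut (hpf : 2 < p ^ f) (hfd : f < d) (hde : d ≤ e)
    (hχ : χ 1 = (1 + p ^ f : ℕ)) :
    Nat.card (MulAut (CharSemidirect χ)) = p ^ (d + e + 2 * f - 1) * (p - 1) := by
  calc Nat.card (MulAut (CharSemidirect χ))
    _ = (p ^ d).totient * p ^ f * (p ^ d * (p ^ e / p ^ (d - f))) := by
      rw [Nat.card_congr (mulAutEquivIsAutPair hpf hfd hde hχ), Nat.card_congr isAutPairEquiv,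
        Nat.card_prod, Nat.card_prod, Nat.card_prod,
        Nat.card_eq_fintype_card (α := (ZMod (p ^ d))ˣ), ZMod.card_units_eq_totient,
        card_nsmul_zmod_eq_zero (pow_dvd_pow p (hfd.le.trans hde)), Nat.card_zmod,
        card_addChar_zmod_eq, orderOf_addChar_one hpf hfd.le hχ]
    _ = p ^ (d - 1) * (p - 1) * p ^ f * (p ^ d * p ^ (e - (d - f))) := by
      rw [Nat.totient_prime_pow hp.out (by lia), Nat.pow_div (by lia) hp.out.pos]
    _ = p ^ (d - 1 + f + d + (e - (d - f))) * (p - 1) := by ring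
    _ = p ^ (d + e + 2 * f - 1) * (p - 1) := by congr 2; lia

end PrimePower

end CharSemidirect

namespace M2

theorem metacyclicRelations (p d e f : ℕ) :
    MetacyclicRelations (p ^ d) (p ^ e) (1 + p ^ f) (M2a p d e f) (M2b p d e f)⁻¹ where
  pow_left := PresentedGroup.one_of_mem (x := FreeGroup.of 0 ^ p ^ d) (by simp [M2rels])
  pow_right := by
    rw [inv_pow, inv_eq_one]
    exact PresentedGroup.one_of_mem (x := FreeGroup.of 1 ^ p ^ e) (by simp [M2rels])
  semiconj := by
    have h : (M2b p d e f)⁻¹ * M2a p d e f * M2b p d e f * (M2a p d e f ^ (1 + p ^ f))⁻¹ = 1 :=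
      PresentedGroup.one_of_mem (x := (FreeGroup.of 1)⁻¹ * FreeGroup.of 0 * FreeGroup.of 1 *
        (FreeGroup.of 0 ^ (1 + p ^ f))⁻¹) (by simp [M2rels])
    rwa [mul_inv_eq_one, ← eq_mul_inv_iff_mul_eq] at h

variable {p d e f : ℕ}

/-- The universal property of the presentation of `M₂(p,d,e,f)`, with `γ` the image of `b⁻¹`. -/
def lift {K : Type*} [Group K] {α γ : K}
    (h : MetacyclicRelations (p ^ d) (p ^ e) (1 + p ^ f) α γ) : M2 p d e f →* K :=
  PresentedGroup.toGroup (f := ![α, γ⁻¹]) <| by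
    rintro r (rfl | rfl | rfl)
    · simp [h.pow_left]
    · simp [h.pow_right]
    · simp [h.semiconj.eq]

/-- The presented group as a semidirect product, with `a` going to `a` and `b` to `c⁻¹`. -/
def mulEquivCharSemidirect [NeZero p] {χ : AddChar (ZMod (p ^ e)) (ZMod (p ^ d))}
    (hχ : χ 1 = (1 + p ^ f : ℕ)) : M2 p d e f ≃* CharSemidirect χ :=
  MonoidHom.toMulEquiv (lift (CharSemidirect.metacyclicRelations_a_c hχ))
    (CharSemidirect.lift hχ (metacyclicRelations p d e f))
    (by
      ext i
      fin_cases i <;> simp [lift, M2a, M2b])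
    (CharSemidirect.hom_ext (by simp [lift, M2a]) (by simp [lift, M2b]))

end M2

theorem stmt_14_general (p d e f : ℕ) (hp : p.Prime) (hpf : 2 < p ^ f) (hfd : f < d)
    (hde : d ≤ e) : Nat.card (MulAut (M2 p d e f)) = p ^ (d + e + 2 * f - 1) * (p - 1) := by
  have : Fact p.Prime := ⟨hp⟩
  have hpow : ((1 + p ^ f : ℕ) : ZMod (p ^ d)) ^ p ^ e = 1 := by
    rw [Nat.cast_add, Nat.cast_one, Nat.cast_pow, ← orderOf_dvd_iff_pow_eq_one,
      orderOf_one_add_prime_pow hp hpf hfd.le]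
    exact pow_dvd_pow p (by lia)
  have hχ : AddChar.zmodChar (p ^ e) hpow 1 = (1 + p ^ f : ℕ) := by
    simpa using AddChar.zmodChar_apply' hpow 1
  rw [Nat.card_congr (MulAut.congr (M2.mulEquivCharSemidirect hχ)).toEquiv]
  exact CharSemidirect.card_mulAut hpf hfd hde hχ

/-- For `1 ≤ f < d < e`, the order of `Aut(M₂(p,d,e,f))` equals
`p^(d+e+2f-1)(p-1)`. -/
theorem stmt_14 (p d e f : ℕ) (hp : p.Prime) (hodd : Odd p)
    (hf : 0 < f) (hfd : f < d) (hde : d < e) :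
    Nat.card (MulAut (M2 p d e f)) = p ^ (d + e + 2 * f - 1) * (p - 1) := by
  have hp2 : 2 < p := hp.two_le.lt_of_ne' (hodd.ne_two_of_dvd_nat dvd_rfl)
  exact stmt_14_general p d e f hp (hp2.trans_le (Nat.le_self_pow hf.ne' p)) hfd hde.le
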